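/- Extend Φ_∞ to the positive real axis by Φ_∞(a) := −1/V_s'(0) + a · PV∫₀^∞ g(u)/(a−u) du − iπ a g(a) for a > 0. Then Φ_∞(a) → −1 as a → +∞, and Re Φ_∞(a) → −1/V_s'(0) < 0 as a → 0⁺. -/

import Mathlib

open MeasureTheory Filter

/-- `HasPV g a L` : the principal value `PV ∫₀^∞ g(u)/(a-u) du` exists and equals `L`. -/
def HasPV (g : ℝ → ℝ) (a L : ℝ) : Prop :=
  Filter.Tendsto (fun ε : ℝ => ∫ u in {u : ℝ | 0 < u ∧ ε < |u - a|}, g u / (a - u))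
    (nhdsWithin 0 (Set.Ioi 0)) (nhds L)

/-!
The profile `V` is a bijection of the half-line, so the substitution `u = V z` gives
`∫₀^∞ g = ∫₀^∞ V'' / V' ^ 2 = 1 / V'(0) - 1 / V'(∞)`. Split the principal value at distance `a / 2`
from the singularity. Far from it the kernel `a / (a - u)` is bounded by `2` and tends to `1` as
`a → ∞` and to `0` as `a → 0⁺`, so dominated convergence yields `∫₀^∞ g` and `0` respectively.
Near it, the constant `g a` may be subtracted because `1 / (a - u)` is odd about `a`; what remains
is controlled by `sup |g'|` and vanishes in both limits because `u ^ 2 * g'(u) → 0`.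
-/

open Set Metric Asymptotics
open scoped Topology

section PrincipalValue

variable {g : ℝ → ℝ} {s : Set ℝ} {a r ε : ℝ}

lemma setIntegral_inv_sub_annulus_eq_zero (a r ε : ℝ) :
    ∫ u in closedBall a r \ closedBall a ε, (a - u)⁻¹ = 0 := by
  have hmeas : MeasurableSet (closedBall a r \ closedBall a ε) :=
    measurableSet_closedBall.diff measurableSet_closedBall
  set k : ℝ → ℝ := (closedBall a r \ closedBall a ε).indicator fun u => (a - u)⁻¹ with hk
  have hodd (u : ℝ) : k (2 * a - u) = -k u := by
    have hdist : dist (2 * a - u) a = dist u a := by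
      rw [Real.dist_eq, Real.dist_eq, ← abs_neg]
      ring_nf
    simp only [hk, indicator, Set.mem_sdiff, mem_closedBall, hdist]
    split_ifs
    · rw [← inv_neg]
      ring_nf
    · exact neg_zero.symm
  have hreflect : ∫ u, k (2 * a - u) = ∫ u, k u := integral_sub_left_eq_self k volume (2 * a)
  simp only [hodd, integral_neg] at hreflect
  rw [← integral_indicator hmeas]
  linarith

lemma integrableOn_div_sub_diff_closedBall (hg : IntegrableOn g s) (hs : MeasurableSet s)
    (hε : 0 < ε) : IntegrableOn (fun u => g u / (a - u)) (s \ closedBall a ε) := by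
  simp only [div_eq_mul_inv]
  refine (hg.mono_set sdiff_subset).mul_bdd (c := ε⁻¹)
    (Measurable.inv (by fun_prop)).aestronglyMeasurable ?_
  refine (ae_restrict_iff' (hs.diff measurableSet_closedBall)).2 (.of_forall fun u hu => ?_)
  have hdist : ε < dist a u := by simpa [dist_comm] using hu.2
  rw [norm_inv, ← dist_eq_norm]
  exact inv_anti₀ hε hdist.le

lemma setIntegral_div_sub_annulus (hg : IntegrableOn (dslope g a) (closedBall a r)) (hε : 0 < ε) :
    ∫ u in closedBall a r \ closedBall a ε, g u / (a - u) =
      -∫ u in closedBall a r \ closedBall a ε, dslope g a u := by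
  have hmeas : MeasurableSet (closedBall a r \ closedBall a ε) :=
    measurableSet_closedBall.diff measurableSet_closedBall
  have hsplit : ∀ u ∈ closedBall a r \ closedBall a ε,
      g u / (a - u) = g a * (a - u)⁻¹ - dslope g a u := by
    intro u hu
    have hne : u ≠ a := by
      rintro rfl
      exact hu.2 (mem_closedBall_self hε.le)
    have h₁ : u - a ≠ 0 := sub_ne_zero.2 hne
    have h₂ : a - u ≠ 0 := sub_ne_zero.2 hne.symm
    rw [dslope_of_ne g hne, slope_def_field]
    field_simp
    ring
  have hinv : IntegrableOn (fun u => (a - u)⁻¹) (closedBall a r \ closedBall a ε) := by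
    have hone : IntegrableOn (fun _ => (1 : ℝ)) (closedBall a r) :=
      integrableOn_const measure_closedBall_lt_top.ne
    simpa only [one_div] using
      integrableOn_div_sub_diff_closedBall hone measurableSet_closedBall hε
  rw [setIntegral_congr_fun hmeas hsplit,
    integral_sub (hinv.const_mul _) (hg.mono_set sdiff_subset), integral_const_mul,
    setIntegral_inv_sub_annulus_eq_zero, mul_zero, zero_sub]

lemma tendsto_setIntegral_diff_closedBall {E : Type*} [NormedAddCommGroup E] [NormedSpace ℝ E]
    {f : ℝ → E} (hf : IntegrableOn f s) (a : ℝ) :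
    Tendsto (fun ε => ∫ u in s \ closedBall a ε, f u) (𝓝[>] 0) (𝓝 (∫ u in s, f u)) := by
  have hvol : Tendsto (fun ε => volume.restrict s (closedBall a ε)) (𝓝[>] 0) (𝓝 0) := by
    have hball : Tendsto (fun ε => volume (closedBall a ε)) (𝓝[>] 0) (𝓝 0) := by
      simp only [Real.volume_closedBall]
      have hcont : Continuous fun ε : ℝ => ENNReal.ofReal (2 * ε) :=
        ENNReal.continuous_ofReal.comp (by fun_prop)
      simpa using (hcont.tendsto 0).mono_left nhdsWithin_le_nhds
    exact tendsto_of_tendsto_of_tendsto_of_le_of_le tendsto_const_nhds hball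
      (fun _ => zero_le) fun _ => Measure.restrict_apply_le _ _
  have hlim := (hf.tendsto_setIntegral_nhds_zero hvol).const_sub (∫ u in s, f u)
  rw [sub_zero] at hlim
  refine hlim.congr fun ε => ?_
  rw [Measure.restrict_restrict measurableSet_closedBall, inter_comm,
    ← integral_inter_add_sdiff measurableSet_closedBall hf, add_sub_cancel_left]

/-- The principal value `PV ∫₀^∞ g(u) / (a - u) du`, written as a sum of two convergent integrals by
subtracting `g a` on the ball of radius `a / 2` around the singularity. -/
noncomputable def principalValue (g : ℝ → ℝ) (a : ℝ) : ℝ :=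
  (∫ u in Ioi 0 \ closedBall a (a / 2), g u / (a - u)) - ∫ u in closedBall a (a / 2), dslope g a u

lemma closedBall_half_subset_Ioi (ha : 0 < a) : closedBall a (a / 2) ⊆ Ioi 0 := by
  intro u hu
  rw [Real.closedBall_eq_Icc] at hu
  have := hu.1
  rw [mem_Ioi]
  linarith

lemma hasPV_principalValue (hint : IntegrableOn g (Ioi 0)) (hcont : ContinuousOn g (Ioi 0))
    (ha : 0 < a) (hdiff : DifferentiableAt ℝ g a) : HasPV g a (principalValue g a) := by
  have hball := closedBall_half_subset_Ioi ha
  have hslope : IntegrableOn (dslope g a) (closedBall a (a / 2)) :=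
    (((continuousOn_dslope (Ioi_mem_nhds ha)).2 ⟨hcont, hdiff⟩).mono hball).integrableOn_compact
      (isCompact_closedBall a _)
  have hsplit : ∀ ε ∈ Ioo 0 (a / 2), ∫ u in {u : ℝ | 0 < u ∧ ε < |u - a|}, g u / (a - u) =
      (∫ u in Ioi 0 \ closedBall a (a / 2), g u / (a - u)) -
        ∫ u in closedBall a (a / 2) \ closedBall a ε, dslope g a u := by
    intro ε hε
    have hset : {u : ℝ | 0 < u ∧ ε < |u - a|} = Ioi 0 \ closedBall a (a / 2) ∪
        closedBall a (a / 2) \ closedBall a ε := by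
      rw [sdiff_union_sdiff_cancel hball (closedBall_subset_closedBall hε.2.le)]
      ext u
      simp [Real.dist_eq]
    rw [hset, setIntegral_union (disjoint_sdiff_left.mono_right sdiff_subset)
      (measurableSet_closedBall.diff measurableSet_closedBall)
      (integrableOn_div_sub_diff_closedBall hint measurableSet_Ioi (half_pos ha))
      (integrableOn_div_sub_diff_closedBall (hint.mono_set hball) measurableSet_closedBall hε.1),
      setIntegral_div_sub_annulus hslope hε.1, sub_eq_add_neg]
  refine ((tendsto_setIntegral_diff_closedBall hslope a).const_sub _).congr' ?_
  filter_upwards [Ioo_mem_nhdsGT (half_pos ha)] with ε hε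
  exact (hsplit ε hε).symm

lemma tendsto_mul_setIntegral_diff_closedBall_half {l : Filter ℝ} [l.IsCountablyGenerated] {c : ℝ}
    (hint : IntegrableOn g (Ioi 0)) (hl : ∀ᶠ a in l, 0 < a)
    (hfar : ∀ u > 0, ∀ᶠ a in l, u ∉ closedBall a (a / 2))
    (hker : ∀ u > 0, Tendsto (fun a => a / (a - u)) l (𝓝 c)) :
    Tendsto (fun a => a * ∫ u in Ioi 0 \ closedBall a (a / 2), g u / (a - u)) l
      (𝓝 (c * ∫ u in Ioi 0, g u)) := by
  have hform (a : ℝ) : a * ∫ u in Ioi 0 \ closedBall a (a / 2), g u / (a - u) =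
      ∫ u in Ioi 0, (closedBall a (a / 2))ᶜ.indicator (fun u => a / (a - u) * g u) u := by
    rw [setIntegral_indicator measurableSet_closedBall.compl, ← sdiff_eq, ← integral_const_mul]
    congr! 2
    ring
  simp only [hform, ← integral_const_mul]
  refine tendsto_integral_filter_of_dominated_convergence (fun u => 2 * |g u|) ?_ ?_
    (hint.abs.const_mul 2) ?_
  · refine .of_forall fun a => AEStronglyMeasurable.indicator ?_ measurableSet_closedBall.compl
    exact (Measurable.aestronglyMeasurable (by fun_prop)).mul hint.aestronglyMeasurable
  · filter_upwards [hl] with a ha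
    refine .of_forall fun u => ?_
    by_cases hu : u ∈ (closedBall a (a / 2))ᶜ
    · have hdist : a / 2 < |a - u| := by simpa [dist_comm, Real.dist_eq] using hu
      rw [indicator_of_mem hu, norm_mul, norm_div, Real.norm_of_nonneg ha.le]
      simp only [Real.norm_eq_abs]
      gcongr
      rw [div_le_iff₀ (by linarith)]
      linarith
    · rw [indicator_of_notMem hu, norm_zero]
      positivity
  · refine (ae_restrict_iff' measurableSet_Ioi).2 (.of_forall fun u hu => ?_)
    refine ((hker u hu).mul_const (g u)).congr' ?_
    filter_upwards [hfar u hu] with a ha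
    have hmem : u ∈ (closedBall a (a / 2))ᶜ := ha
    rw [indicator_of_mem hmem]

lemma norm_mul_setIntegral_dslope_le {δ : ℝ} (ha : 0 < a) (hdiff : DifferentiableOn ℝ g (Ioi 0))
    (hδ : ∀ u ∈ closedBall a (a / 2), |u ^ 2 * deriv g u| ≤ δ) :
    ‖a * ∫ u in closedBall a (a / 2), dslope g a u‖ ≤ 4 * δ := by
  have hball := closedBall_half_subset_Ioi ha
  have ha_mem : a ∈ closedBall a (a / 2) := mem_closedBall_self (half_pos ha).le
  have hdiffAt : ∀ u ∈ closedBall a (a / 2), DifferentiableAt ℝ g u := fun u hu =>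
    hdiff.differentiableAt (Ioi_mem_nhds (hball hu))
  have hderiv : ∀ u ∈ closedBall a (a / 2), ‖deriv g u‖ ≤ 4 * δ / a ^ 2 := by
    intro u hu
    have hu_ge : a / 2 ≤ u := by
      rw [Real.closedBall_eq_Icc] at hu
      linarith [hu.1]
    have h := hδ u hu
    rw [abs_mul, abs_of_nonneg (sq_nonneg u)] at h
    rw [le_div_iff₀ (by positivity), Real.norm_eq_abs]
    have hsq : (a / 2) ^ 2 * |deriv g u| ≤ δ := le_trans (by gcongr) h
    linarith
  have hslope : ∀ u ∈ closedBall a (a / 2), ‖dslope g a u‖ ≤ 4 * δ / a ^ 2 := by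
    intro u hu
    rcases eq_or_ne u a with rfl | hne
    · rw [dslope_same]
      exact hderiv u hu
    · have hmvt := (convex_closedBall a (a / 2)).norm_image_sub_le_of_norm_deriv_le hdiffAt hderiv
        ha_mem hu
      rw [dslope_of_ne g hne, slope_def_field, norm_div]
      exact (div_le_iff₀ (norm_pos_iff.2 (sub_ne_zero.2 hne))).2 hmvt
  calc ‖a * ∫ u in closedBall a (a / 2), dslope g a u‖
      = a * ‖∫ u in closedBall a (a / 2), dslope g a u‖ := by
        rw [norm_mul, Real.norm_of_nonneg ha.le]
    _ ≤ a * (4 * δ / a ^ 2 * volume.real (closedBall a (a / 2))) := by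
        gcongr
        exact norm_setIntegral_le_of_norm_le_const measure_closedBall_lt_top hslope
    _ = 4 * δ := by
        rw [Real.volume_real_closedBall (half_pos ha).le]
        field_simp

lemma tendsto_mul_principalValue {l : Filter ℝ} [l.IsCountablyGenerated] {c : ℝ}
    (hint : IntegrableOn g (Ioi 0)) (hdiff : DifferentiableOn ℝ g (Ioi 0))
    (hderiv : Tendsto (fun u => u ^ 2 * deriv g u) l (𝓝 0))
    (hl : ∀ᶠ a in l, 0 < a) (hne : ∀ u > 0, ∀ᶠ a in l, a ≠ u)
    (hball : Tendsto (fun a => closedBall a (a / 2)) l l.smallSets)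
    (hker : ∀ u > 0, Tendsto (fun a => a / (a - u)) l (𝓝 c)) :
    Tendsto (fun a => a * principalValue g a) l (𝓝 (c * ∫ u in Ioi 0, g u)) := by
  have hfar : Tendsto (fun a => a * ∫ u in Ioi 0 \ closedBall a (a / 2), g u / (a - u)) l
      (𝓝 (c * ∫ u in Ioi 0, g u)) := by
    refine tendsto_mul_setIntegral_diff_closedBall_half hint hl (fun u hu => ?_) hker
    filter_upwards [tendsto_smallSets_iff.1 hball _ (hne u hu)] with a ha hmem
    exact ha hmem rfl
  have hnear : Tendsto (fun a => a * ∫ u in closedBall a (a / 2), dslope g a u) l (𝓝 0) := by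
    refine NormedAddGroup.tendsto_nhds_zero.2 fun δ hδ => ?_
    have hsmall : ∀ᶠ u in l, |u ^ 2 * deriv g u| ≤ δ / 8 := by
      filter_upwards [NormedAddGroup.tendsto_nhds_zero.1 hderiv (δ / 8) (by positivity)] with u hu
      exact hu.le
    filter_upwards [hl, tendsto_smallSets_iff.1 hball _ hsmall] with a ha hsub
    linarith [norm_mul_setIntegral_dslope_le ha hdiff hsub]
  simpa only [principalValue, mul_sub, sub_zero] using hfar.sub hnear

lemma tendsto_mul_principalValue_atTop (hint : IntegrableOn g (Ioi 0))
    (hdiff : DifferentiableOn ℝ g (Ioi 0))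
    (hderiv : Tendsto (fun u => u ^ 2 * deriv g u) atTop (𝓝 0)) :
    Tendsto (fun a => a * principalValue g a) atTop (𝓝 (∫ u in Ioi 0, g u)) := by
  rw [← one_mul (∫ u in Ioi 0, g u)]
  refine tendsto_mul_principalValue hint hdiff hderiv (eventually_gt_atTop 0)
    (fun u _ => eventually_ne_atTop u) (tendsto_smallSets_iff.2 fun t ht => ?_) fun u _ => ?_
  · obtain ⟨M, hM⟩ := mem_atTop_sets.1 ht
    filter_upwards [eventually_ge_atTop (2 * M)] with a ha u hu
    rw [Real.closedBall_eq_Icc] at hu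
    exact hM u (by linarith [hu.1])
  · have hsub : Tendsto (fun a : ℝ => a - u) atTop atTop :=
      tendsto_atTop_add_const_right _ _ tendsto_id
    have hlim : Tendsto (fun a : ℝ => 1 + u / (a - u)) atTop (𝓝 1) := by
      simpa using (hsub.const_div_atTop u).const_add 1
    refine hlim.congr' ?_
    filter_upwards [eventually_ne_atTop u] with a ha
    have : a - u ≠ 0 := sub_ne_zero.2 ha
    field_simp
    ring

lemma tendsto_mul_principalValue_nhdsGT_zero (hint : IntegrableOn g (Ioi 0))
    (hdiff : DifferentiableOn ℝ g (Ioi 0))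
    (hderiv : Tendsto (fun u => u ^ 2 * deriv g u) (𝓝[>] 0) (𝓝 0)) :
    Tendsto (fun a => a * principalValue g a) (𝓝[>] 0) (𝓝 0) := by
  suffices h : Tendsto (fun a => a * principalValue g a) (𝓝[>] 0) (𝓝 (0 * ∫ u in Ioi 0, g u)) by
    rwa [zero_mul] at h
  refine tendsto_mul_principalValue hint hdiff hderiv self_mem_nhdsWithin
    (fun u hu => ?_) (tendsto_smallSets_iff.2 fun t ht => ?_) fun u hu => ?_
  · filter_upwards [Ioo_mem_nhdsGT hu] with a ha
    exact ha.2.ne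
  · obtain ⟨b, hb, hbt⟩ := mem_nhdsGT_iff_exists_Ioo_subset.1 ht
    filter_upwards [Ioo_mem_nhdsGT (half_pos (mem_Ioi.1 hb))] with a ha
    refine fun u hu => hbt ⟨closedBall_half_subset_Ioi ha.1 hu, ?_⟩
    rw [Real.closedBall_eq_Icc] at hu
    linarith [hu.2, ha.1, ha.2]
  · have hcont : ContinuousAt (fun a : ℝ => a / (a - u)) 0 :=
      ContinuousAt.div (by fun_prop) (by fun_prop) (by simpa using (mem_Ioi.1 hu).ne')
    simpa using hcont.tendsto.mono_left nhdsWithin_le_nhds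

end PrincipalValue

section Calculus

lemma isLittleO_id_of_tendsto_deriv_zero {E : Type*} [NormedAddCommGroup E] [NormedSpace ℝ E]
    {f : ℝ → E} (hf : Differentiable ℝ f) (h : Tendsto (deriv f) atTop (𝓝 0)) :
    f =o[atTop] (id : ℝ → ℝ) := by
  refine isLittleO_iff.2 fun ε hε => ?_
  obtain ⟨M, hM⟩ := eventually_atTop.1 (NormedAddGroup.tendsto_nhds_zero.1 h (ε / 2) (half_pos hε))
  have hlarge : ∀ᶠ x in atTop, ‖f (max M 0)‖ ≤ ε / 2 * x :=
    (tendsto_id.const_mul_atTop (half_pos hε)).eventually_ge_atTop _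
  filter_upwards [hlarge, eventually_ge_atTop (max M 0)] with x hfx hx
  have hmvt : ‖f x - f (max M 0)‖ ≤ ε / 2 * ‖x - max M 0‖ :=
    (convex_Ici (max M 0)).norm_image_sub_le_of_norm_deriv_le (fun y _ => hf y)
      (fun y hy => (hM y ((le_max_left _ _).trans hy)).le) self_mem_Ici hx
  have hx₀ : 0 ≤ x := (le_max_right _ _).trans hx
  rw [Real.norm_of_nonneg (sub_nonneg.2 hx)] at hmvt
  calc ‖f x‖ ≤ ‖f x - f (max M 0)‖ + ‖f (max M 0)‖ := norm_le_norm_sub_add _ _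
    _ ≤ ε / 2 * (x - 0) + ε / 2 * x := by
        refine add_le_add (hmvt.trans ?_) hfx
        gcongr
        exact le_max_right _ _
    _ = ε * ‖id x‖ := by
        rw [id, Real.norm_of_nonneg hx₀]
        ring

lemma tendsto_div_self_of_tendsto_deriv {f : ℝ → ℝ} {c : ℝ} (hf : Differentiable ℝ f)
    (h : Tendsto (deriv f) atTop (𝓝 c)) : Tendsto (fun x => f x / x) atTop (𝓝 c) := by
  have hderiv : deriv (fun x => f x - c * x) = fun x => deriv f x - c := by
    ext x
    rw [deriv_fun_sub (hf x) (by fun_prop), deriv_const_mul_id]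
  have hlo : (fun x => f x - c * x) =o[atTop] (id : ℝ → ℝ) := by
    refine isLittleO_id_of_tendsto_deriv_zero (by fun_prop) ?_
    simpa only [hderiv, sub_self] using h.sub_const c
  have hlim := hlo.tendsto_div_nhds_zero.add_const c
  rw [zero_add] at hlim
  refine hlim.congr' ?_
  filter_upwards [eventually_ne_atTop 0] with x hx
  simp only [id]
  field_simp
  ring

lemma tendsto_atTop_of_tendsto_deriv_pos {f : ℝ → ℝ} {c : ℝ} (hf : Differentiable ℝ f)
    (hc : 0 < c) (h : Tendsto (deriv f) atTop (𝓝 c)) : Tendsto f atTop atTop := by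
  refine ((tendsto_div_self_of_tendsto_deriv hf h).pos_mul_atTop hc tendsto_id).congr' ?_
  filter_upwards [eventually_ne_atTop 0] with x hx
  exact div_mul_cancel₀ _ hx

lemma hasDerivAt_of_hasDerivAt_comp {𝕜 E : Type*} [NontriviallyNormedField 𝕜] [CompleteSpace 𝕜]
    [NormedAddCommGroup E] [NormedSpace 𝕜 E] {f : 𝕜 → 𝕜} {g : 𝕜 → E} {f' x : 𝕜} {F' : E}
    (hf : HasStrictDerivAt f f' x) (hf' : f' ≠ 0) (hgf : HasDerivAt (g ∘ f) F' x) :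
    HasDerivAt g (f'⁻¹ • F') (f x) := by
  have hinv := (hf.to_localInverse hf').hasDerivAt
  have hleft : hf.localInverse f f' x hf' (f x) = x := (hf.eventually_left_inverse hf').self_of_nhds
  rw [← hleft] at hgf
  refine (hgf.scomp (f x) hinv).congr_of_eventuallyEq ?_
  filter_upwards [hf.eventually_right_inverse hf'] with u hu
  simp only [Function.comp_apply, hu]

lemma integrableOn_Ioi_of_tendsto_sq_mul {f : ℝ → ℝ} {a c : ℝ} (hf : ContinuousOn f (Ici a))
    (h : Tendsto (fun x => x ^ 2 * f x) atTop (𝓝 c)) : IntegrableOn f (Ioi a) := by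
  have hbig : f =O[atTop] fun x : ℝ => x ^ (-2 : ℝ) := by
    refine ((h.isBigO_one ℝ).mul (isBigO_refl (fun x : ℝ => x ^ (-2 : ℝ)) atTop)).congr' ?_ ?_
    · filter_upwards [eventually_gt_atTop 0] with x hx
      rw [Real.rpow_neg hx.le, Real.rpow_two]
      field_simp
    · exact .of_forall fun x => one_mul _
  exact ((hf.locallyIntegrableOn measurableSet_Ici).integrableOn_of_isBigO_atTop hbig
    (integrableAtFilter_rpow_atTop_iff.2 (by norm_num))).mono_set Ioi_subset_Ici_self

end Calculus

section StrictMono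

variable {α β : Type*} [LinearOrder α] [LinearOrder β] {f : α → β} {a : α} {b : β}

lemma map_atTop_eq_of_strictMonoOn_Ioi [NoMaxOrder α] [NoMaxOrder β]
    (hf : StrictMonoOn f (Ioi a)) (himg : f '' Ioi a = Ioi b) : map f atTop = atTop := by
  obtain ⟨e, he⟩ : ∃ e : Ioi a ≃o Ioi b, ∀ x, (e x : β) = f x :=
    himg ▸ ⟨hf.orderIso, fun _ => rfl⟩
  rw [← map_val_Ioi_atTop a, ← map_val_Ioi_atTop b, ← e.map_atTop, map_map, map_map]
  exact congrArg (map · atTop) (funext fun x => (he x).symm)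

lemma map_nhdsGT_eq_of_strictMonoOn_Ioi [TopologicalSpace α] [OrderTopology α] [DenselyOrdered α]
    [TopologicalSpace β] [OrderTopology β] [DenselyOrdered β]
    (hf : StrictMonoOn f (Ioi a)) (himg : f '' Ioi a = Ioi b) : map f (𝓝[>] a) = 𝓝[>] b := by
  obtain ⟨e, he⟩ : ∃ e : Ioi a ≃o Ioi b, ∀ x, (e x : β) = f x :=
    himg ▸ ⟨hf.orderIso, fun _ => rfl⟩
  rw [← map_coe_Ioi_atBot a, ← map_coe_Ioi_atBot b, ← e.map_atBot, map_map, map_map]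
  exact congrArg (map · atBot) (funext fun x => (he x).symm)

end StrictMono

section Profile

variable {V g : ℝ → ℝ} {c z : ℝ}

lemma strictMonoOn_Ici_of_deriv_pos (hV : Continuous V) (hpos : ∀ z, 0 ≤ z → 0 < deriv V z) :
    StrictMonoOn V (Ici 0) :=
  strictMonoOn_of_deriv_pos (convex_Ici 0) hV.continuousOn fun z hz =>
    hpos z (interior_subset hz)

lemma image_Ioi_eq_of_tendsto_deriv_pos (hV : Differentiable ℝ V) (h0 : V 0 = 0)
    (hpos : ∀ z, 0 ≤ z → 0 < deriv V z) (hc : 0 < c) (hlim : Tendsto (deriv V) atTop (𝓝 c)) :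
    V '' Ioi 0 = Ioi 0 := by
  have himg := hV.continuous.continuousOn.image_Ioi_of_strictMonoOn
    (strictMonoOn_Ici_of_deriv_pos hV.continuous hpos)
    (tendsto_atTop_of_tendsto_deriv_pos hV hc hlim)
  rwa [h0] at himg

lemma hasDerivAt_deriv_deriv_div_cube (hV : ContDiff ℝ 3 V) (hz : deriv V z ≠ 0) :
    HasDerivAt (fun z => deriv (deriv V) z / deriv V z ^ 3)
      ((deriv (deriv (deriv V)) z * deriv V z - 3 * deriv (deriv V) z ^ 2) / deriv V z ^ 4) z := by
  have hV₁ : HasDerivAt (deriv V) (deriv (deriv V) z) z :=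
    ((ContDiff.iterate_deriv' 2 1 hV).differentiable two_ne_zero z).hasDerivAt
  have hV₂ : HasDerivAt (deriv (deriv V)) (deriv (deriv (deriv V)) z) z :=
    ((ContDiff.iterate_deriv' 1 2 hV).differentiable one_ne_zero z).hasDerivAt
  refine (hV₂.fun_div (hV₁.fun_pow 3) (pow_ne_zero 3 hz)).congr_deriv ?_
  field_simp
  push_cast
  ring

/-- `g` is the density `V'' / V' ^ 3` of the shear profile `V`, expressed in the variable `u = V z`,
so that `g(u) du = V'' / V' ^ 2 dz`. Only the values of `g` on `V '' [0, ∞)` are prescribed. -/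
def IsShearDensity (V g : ℝ → ℝ) : Prop :=
  ∀ z, 0 ≤ z → g (V z) = deriv (deriv V) z / deriv V z ^ 3

lemma IsShearDensity.hasDerivAt (hg : IsShearDensity V g) (hV : ContDiff ℝ 3 V)
    (hpos : ∀ z, 0 ≤ z → 0 < deriv V z) (hz : 0 < z) :
    HasDerivAt g
      ((deriv (deriv (deriv V)) z * deriv V z - 3 * deriv (deriv V) z ^ 2) / deriv V z ^ 5)
      (V z) := by
  have hne : deriv V z ≠ 0 := (hpos z hz.le).ne'
  have hstrict : HasStrictDerivAt V (deriv V z) z :=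
    hV.contDiffAt.hasStrictDerivAt three_ne_zero
  have hgV : HasDerivAt (g ∘ V)
      ((deriv (deriv (deriv V)) z * deriv V z - 3 * deriv (deriv V) z ^ 2) / deriv V z ^ 4) z := by
    refine (hasDerivAt_deriv_deriv_div_cube hV hne).congr_of_eventuallyEq ?_
    filter_upwards [Ioi_mem_nhds hz] with x hx
    exact hg x (le_of_lt hx)
  refine (hasDerivAt_of_hasDerivAt_comp hstrict hne hgV).congr_deriv ?_
  rw [smul_eq_mul]
  field_simp

lemma IsShearDensity.differentiableOn_Ioi (hg : IsShearDensity V g) (hV : ContDiff ℝ 3 V)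
    (hpos : ∀ z, 0 ≤ z → 0 < deriv V z) (himg : V '' Ioi 0 = Ioi 0) :
    DifferentiableOn ℝ g (Ioi 0) := by
  rw [← himg]
  rintro _ ⟨z, hz, rfl⟩
  exact (hg.hasDerivAt hV hpos hz).differentiableAt.differentiableWithinAt

lemma IsShearDensity.tendsto_mul_atTop (hg : IsShearDensity V g) (hV : Differentiable ℝ V)
    (hpos : ∀ z, 0 ≤ z → 0 < deriv V z) (himg : V '' Ioi 0 = Ioi 0) (hc : c ≠ 0)
    (hlim : Tendsto (deriv V) atTop (𝓝 c))
    (hV₂ : Tendsto (fun z => z * deriv (deriv V) z) atTop (𝓝 0)) :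
    Tendsto (fun u => u * g u) atTop (𝓝 0) := by
  have hmono := strictMonoOn_Ici_of_deriv_pos hV.continuous hpos
  rw [← map_atTop_eq_of_strictMonoOn_Ioi (hmono.mono Ioi_subset_Ici_self) himg, tendsto_map'_iff]
  have hlim' := ((tendsto_div_self_of_tendsto_deriv hV hlim).mul hV₂).div (hlim.pow 3)
    (pow_ne_zero 3 hc)
  simp only [mul_zero, zero_div] at hlim'
  refine hlim'.congr' ?_
  filter_upwards [eventually_gt_atTop 0] with z hz
  have hne : deriv V z ≠ 0 := (hpos z hz.le).ne'
  simp only [Pi.div_apply, Function.comp_apply, hg z hz.le]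
  field_simp

lemma IsShearDensity.tendsto_sq_mul_deriv_atTop (hg : IsShearDensity V g) (hV : ContDiff ℝ 3 V)
    (hpos : ∀ z, 0 ≤ z → 0 < deriv V z) (himg : V '' Ioi 0 = Ioi 0) (hc : c ≠ 0)
    (hlim : Tendsto (deriv V) atTop (𝓝 c))
    (hV₂ : Tendsto (fun z => z * deriv (deriv V) z) atTop (𝓝 0))
    (hV₃ : Tendsto (fun z => z ^ 2 * deriv (deriv (deriv V)) z) atTop (𝓝 0)) :
    Tendsto (fun u => u ^ 2 * deriv g u) atTop (𝓝 0) := by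
  have hmono := strictMonoOn_Ici_of_deriv_pos hV.continuous hpos
  have hratio := tendsto_div_self_of_tendsto_deriv (hV.differentiable three_ne_zero) hlim
  rw [← map_atTop_eq_of_strictMonoOn_Ioi (hmono.mono Ioi_subset_Ici_self) himg, tendsto_map'_iff]
  have hlim' := (hratio.pow 2).mul
    (((hV₃.mul hlim).sub ((hV₂.pow 2).const_mul 3)).div (hlim.pow 5) (pow_ne_zero 5 hc))
  simp only [zero_mul, ne_eq, OfNat.ofNat_ne_zero, not_false_eq_true, zero_pow, mul_zero,
    sub_zero, zero_div] at hlim'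
  refine hlim'.congr' ?_
  filter_upwards [eventually_gt_atTop 0] with z hz
  have hne : deriv V z ≠ 0 := (hpos z hz.le).ne'
  simp only [Pi.div_apply, Function.comp_apply, (hg.hasDerivAt hV hpos hz).deriv]
  field_simp

lemma IsShearDensity.tendsto_sq_mul_deriv_nhdsGT_zero (hg : IsShearDensity V g)
    (hV : ContDiff ℝ 3 V) (h0 : V 0 = 0) (hpos : ∀ z, 0 ≤ z → 0 < deriv V z)
    (himg : V '' Ioi 0 = Ioi 0) :
    Tendsto (fun u => u ^ 2 * deriv g u) (𝓝[>] 0) (𝓝 0) := by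
  have hmono := strictMonoOn_Ici_of_deriv_pos hV.continuous hpos
  rw [← map_nhdsGT_eq_of_strictMonoOn_Ioi (hmono.mono Ioi_subset_Ici_self) himg, tendsto_map'_iff]
  have hV₁ : Continuous (deriv V) := hV.continuous_deriv (by norm_num)
  have hV₂ : Continuous (deriv (deriv V)) := (ContDiff.iterate_deriv' 1 2 hV).continuous
  have hV₃ : Continuous (deriv (deriv (deriv V))) := (ContDiff.iterate_deriv' 0 3 hV).continuous
  have hcont : ContinuousAt (fun z => V z ^ 2 *
      ((deriv (deriv (deriv V)) z * deriv V z - 3 * deriv (deriv V) z ^ 2) / deriv V z ^ 5)) 0 :=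
    (hV.continuous.pow 2).continuousAt.mul
      ((((hV₃.mul hV₁).sub ((hV₂.pow 2).const_mul 3)).continuousAt).div (hV₁.pow 5).continuousAt
        (pow_ne_zero 5 (hpos 0 le_rfl).ne'))
  have hlim := hcont.tendsto.mono_left (nhdsWithin_le_nhds (s := Ioi 0))
  simp only [h0, ne_eq, OfNat.ofNat_ne_zero, not_false_eq_true, zero_pow, zero_mul] at hlim
  refine hlim.congr' ?_
  filter_upwards [self_mem_nhdsWithin] with z hz
  rw [Function.comp_apply, (hg.hasDerivAt hV hpos hz).deriv]

lemma integrableOn_deriv_deriv_div_sq (hV : ContDiff ℝ 2 V) (hpos : ∀ z, 0 ≤ z → 0 < deriv V z)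
    (hc : c ≠ 0) (hlim : Tendsto (deriv V) atTop (𝓝 c))
    (hV₂ : IntegrableOn (deriv (deriv V)) (Ioi 0)) :
    IntegrableOn (fun z => deriv (deriv V) z / deriv V z ^ 2) (Ioi 0) := by
  have hcont₁ : Continuous (deriv V) := hV.continuous_deriv (by norm_num)
  have hcont₂ : Continuous (deriv (deriv V)) := (ContDiff.iterate_deriv' 0 2 hV).continuous
  have hcont : ContinuousOn (fun z => deriv (deriv V) z / deriv V z ^ 2) (Ici 0) :=
    hcont₂.continuousOn.div (by fun_prop) fun z hz => pow_ne_zero 2 (hpos z hz).ne'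
  have hbig : (fun z => deriv (deriv V) z / deriv V z ^ 2) =O[atTop] deriv (deriv V) := by
    have hinv := ((hlim.pow 2).inv₀ (pow_ne_zero 2 hc)).isBigO_one ℝ
    simpa only [div_eq_mul_inv, mul_one] using (isBigO_refl (deriv (deriv V)) atTop).mul hinv
  exact ((hcont.locallyIntegrableOn measurableSet_Ici).integrableOn_of_isBigO_atTop hbig
    ⟨Ioi 0, Ioi_mem_atTop 0, hV₂⟩).mono_set Ioi_subset_Ici_self

lemma IsShearDensity.abs_deriv_smul_comp (hg : IsShearDensity V g)
    (hpos : ∀ z, 0 ≤ z → 0 < deriv V z) (hz : 0 ≤ z) :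
    |deriv V z| • g (V z) = deriv (deriv V) z / deriv V z ^ 2 := by
  have hne := (hpos z hz).ne'
  rw [hg z hz, abs_of_pos (hpos z hz), smul_eq_mul]
  field_simp

lemma IsShearDensity.integrableOn_Ioi (hg : IsShearDensity V g) (hV : ContDiff ℝ 2 V)
    (hpos : ∀ z, 0 ≤ z → 0 < deriv V z) (himg : V '' Ioi 0 = Ioi 0) (hc : c ≠ 0)
    (hlim : Tendsto (deriv V) atTop (𝓝 c)) (hV₂ : IntegrableOn (deriv (deriv V)) (Ioi 0)) :
    IntegrableOn g (Ioi 0) := by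
  have hmono := strictMonoOn_Ici_of_deriv_pos hV.continuous hpos
  rw [← himg, integrableOn_image_iff_integrableOn_abs_deriv_smul measurableSet_Ioi
    (fun z _ => (hV.differentiable two_ne_zero z).hasDerivAt.hasDerivWithinAt)
    (hmono.injOn.mono Ioi_subset_Ici_self)]
  exact (integrableOn_deriv_deriv_div_sq hV hpos hc hlim hV₂).congr_fun
    (fun z hz => (hg.abs_deriv_smul_comp hpos (le_of_lt hz)).symm) measurableSet_Ioi

lemma IsShearDensity.integral_Ioi (hg : IsShearDensity V g) (hV : ContDiff ℝ 2 V)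
    (hpos : ∀ z, 0 ≤ z → 0 < deriv V z) (himg : V '' Ioi 0 = Ioi 0) (hc : c ≠ 0)
    (hlim : Tendsto (deriv V) atTop (𝓝 c)) (hV₂ : IntegrableOn (deriv (deriv V)) (Ioi 0)) :
    ∫ u in Ioi 0, g u = (deriv V 0)⁻¹ - c⁻¹ := by
  have hmono := strictMonoOn_Ici_of_deriv_pos hV.continuous hpos
  have hprimitive : ∀ z ∈ Ici (0 : ℝ),
      HasDerivAt (fun z => -(deriv V z)⁻¹) (deriv (deriv V) z / deriv V z ^ 2) z := by
    intro z hz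
    have hderiv : HasDerivAt (deriv V) (deriv (deriv V) z) z :=
      ((ContDiff.iterate_deriv' 1 1 hV).differentiable one_ne_zero z).hasDerivAt
    refine (hderiv.fun_inv (hpos z hz).ne').fun_neg.congr_deriv ?_
    ring
  calc ∫ u in Ioi 0, g u = ∫ u in V '' Ioi 0, g u := by rw [himg]
    _ = ∫ z in Ioi 0, |deriv V z| • g (V z) :=
        integral_image_eq_integral_abs_deriv_smul measurableSet_Ioi
          (fun z _ => (hV.differentiable two_ne_zero z).hasDerivAt.hasDerivWithinAt)
          (hmono.injOn.mono Ioi_subset_Ici_self) g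
    _ = ∫ z in Ioi 0, deriv (deriv V) z / deriv V z ^ 2 :=
        setIntegral_congr_fun measurableSet_Ioi fun z hz =>
          hg.abs_deriv_smul_comp hpos (le_of_lt hz)
    _ = -c⁻¹ - -(deriv V 0)⁻¹ :=
        integral_Ioi_of_hasDerivAt_of_tendsto' hprimitive
          (integrableOn_deriv_deriv_div_sq hV hpos hc hlim hV₂) (hlim.inv₀ hc).neg
    _ = (deriv V 0)⁻¹ - c⁻¹ := by ring

lemma deriv_sub_id (hV : Differentiable ℝ V) :
    deriv (fun w => V w - w) = fun w => deriv V w - 1 := by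
  ext w
  rw [deriv_fun_sub (hV w) differentiableAt_fun_id, deriv_id'']

lemma tendsto_deriv_of_tendsto_iteratedDeriv_sub_id (hV : Differentiable ℝ V)
    (h : Tendsto (iteratedDeriv 1 fun w => V w - w) atTop (𝓝 0)) :
    Tendsto (deriv V) atTop (𝓝 1) := by
  rw [iteratedDeriv_one, deriv_sub_id hV] at h
  simpa using h.add_const 1

lemma iteratedDeriv_add_two_sub_id (hV : Differentiable ℝ V) (n : ℕ) :
    iteratedDeriv (n + 2) (fun w => V w - w) = iteratedDeriv n (deriv (deriv V)) := by
  rw [iteratedDeriv_succ', iteratedDeriv_succ', deriv_sub_id hV, deriv_sub_const_fun]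

theorem PhiInf_boundary_extension_limits_general (hV : ContDiff ℝ 3 V) (h0 : V 0 = 0)
    (hpos : ∀ z, 0 ≤ z → 0 < deriv V z) (hc : 0 < c) (hlim : Tendsto (deriv V) atTop (𝓝 c))
    (hint : IntegrableOn (deriv (deriv V)) (Ioi 0))
    (hV₂ : Tendsto (fun z => z * deriv (deriv V) z) atTop (𝓝 0))
    (hV₃ : Tendsto (fun z => z ^ 2 * deriv (deriv (deriv V)) z) atTop (𝓝 0))
    (hg : IsShearDensity V g) :
    ∃ P : ℝ → ℝ, (∀ a : ℝ, 0 < a → HasPV g a (P a)) ∧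
      Tendsto (fun a : ℝ => ((-1 / deriv V 0 + a * P a : ℝ) : ℂ)
          - (Real.pi : ℂ) * (a : ℂ) * (g a : ℂ) * Complex.I) atTop (𝓝 (-1 / c)) ∧
      Tendsto (fun a : ℝ => -1 / deriv V 0 + a * P a) (𝓝[>] 0) (𝓝 (-1 / deriv V 0)) ∧
      -1 / deriv V 0 < 0 := by
  have hV' : ContDiff ℝ 2 V := hV.of_le (by norm_num)
  have hdiffV : Differentiable ℝ V := hV.differentiable three_ne_zero
  have himg := image_Ioi_eq_of_tendsto_deriv_pos hdiffV h0 hpos hc hlim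
  have hgint := hg.integrableOn_Ioi hV' hpos himg hc.ne' hlim hint
  have hgdiff := hg.differentiableOn_Ioi hV hpos himg
  refine ⟨principalValue g, fun a ha => hasPV_principalValue hgint hgdiff.continuousOn ha
    (hgdiff.differentiableAt (Ioi_mem_nhds ha)), ?_, ?_,
    div_neg_of_neg_of_pos neg_one_lt_zero (hpos 0 le_rfl)⟩
  · have hre := (tendsto_mul_principalValue_atTop hgint hgdiff
      (hg.tendsto_sq_mul_deriv_atTop hV hpos himg hc.ne' hlim hV₂ hV₃)).const_add
      (-1 / deriv V 0)
    have him := hg.tendsto_mul_atTop hdiffV hpos himg hc.ne' hlim hV₂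
    convert hre.ofReal.sub ((him.ofReal.const_mul (Real.pi : ℂ)).mul_const Complex.I) using 2
    · push_cast
      ring
    · rw [hg.integral_Ioi hV' hpos himg hc.ne' hlim hint]
      push_cast
      ring
  · simpa only [add_zero] using (tendsto_mul_principalValue_nhdsGT_zero hgint hgdiff
      (hg.tendsto_sq_mul_deriv_nhdsGT_zero hV h0 hpos himg)).const_add (-1 / deriv V 0)

end Profile

/-- the boundary extension
`Φ_∞(a) = -1/V_s'(0) + a PV∫₀^∞ g(u)/(a-u) du - iπ a g(a)` satisfies `Φ_∞(a) → -1`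
as `a → +∞` and `Re Φ_∞(a) → -1/V_s'(0) < 0` as `a → 0⁺`. -/
theorem PhiInf_boundary_extension_limits
    (Vs : ℝ → ℝ) (As : ℝ)
    (hVs_smooth : ContDiff ℝ (⊤ : ℕ∞) Vs)
    (hVs0 : Vs 0 = 0)
    (hVs'pos : ∀ z : ℝ, 0 ≤ z → 0 < deriv Vs z)
    (hdecay : ∀ p : ℕ, Tendsto (fun z : ℝ => z ^ p * (Vs z - z - As)) atTop (nhds 0))
    (hderiv_decay : ∀ n : ℕ, 1 ≤ n → ∀ p : ℕ,
      Tendsto (fun z : ℝ => z ^ p * iteratedDeriv n (fun w => Vs w - w) z) atTop (nhds 0))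
    (g : ℝ → ℝ)
    (hg : ∀ z : ℝ, 0 ≤ z → g (Vs z) = deriv (deriv Vs) z / (deriv Vs z) ^ 3)
    :
    ∃ P : ℝ → ℝ, (∀ a : ℝ, 0 < a → HasPV g a (P a)) ∧
      Tendsto (fun a : ℝ => ((-1 / deriv Vs 0 + a * P a : ℝ) : ℂ)
          - (Real.pi : ℂ) * (a : ℂ) * (g a : ℂ) * Complex.I) atTop (nhds (-1)) ∧
      Tendsto (fun a : ℝ => -1 / deriv Vs 0 + a * P a)
        (nhdsWithin 0 (Set.Ioi 0)) (nhds (-1 / deriv Vs 0)) ∧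
      -1 / deriv Vs 0 < 0 := by
  have hV : Differentiable ℝ Vs := hVs_smooth.differentiable (by simp)
  have hlim : Tendsto (deriv Vs) atTop (𝓝 1) :=
    tendsto_deriv_of_tendsto_iteratedDeriv_sub_id hV (by simpa using hderiv_decay 1 le_rfl 0)
  have hVs''_decay (n p : ℕ) :
      Tendsto (fun z => z ^ p * iteratedDeriv n (deriv (deriv Vs)) z) atTop (𝓝 0) := by
    simpa only [iteratedDeriv_add_two_sub_id hV] using hderiv_decay (n + 2) (by lia) p
  have hcont : Continuous (deriv (deriv Vs)) :=
    (ContDiff.iterate_deriv' 0 2 (contDiff_infty.1 hVs_smooth 2)).continuous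
  simpa using PhiInf_boundary_extension_limits_general (contDiff_infty.1 hVs_smooth 3) hVs0 hVs'pos
    one_pos hlim (integrableOn_Ioi_of_tendsto_sq_mul hcont.continuousOn (hVs''_decay 0 2))
    (by simpa using hVs''_decay 0 1) (by simpa using hVs''_decay 1 2) hg
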